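/- Let N ≥ 1 and Λ > 1. Let (u, v) be a classical solution of the system (P_Λ) with u ≥ 0 and v ≥ 0 on ℝ^N, satisfying condition (h∞). Then for every unit vector ν ∈ ℝ^N with ν·e_N > 0, the directional derivatives satisfy ∂_ν u > 0 and ∂_ν v < 0 at every point of ℝ^N. -/

import Mathlib

/-!
With `w = u² + v² - 1` one has `Δw ≥ 2 w²` where `w > 0`, so `u² + v² ≤ 1` by a Keller–Osserman
argument; bounded functions with bounded Laplacian being Lipschitz, `u` and `v` are uniformly
continuous.

The order `u(x) ≤ u(x + a)`, `v(x + a) ≤ v(x)` is then studied by sliding. Near the limit states the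
reaction terms are coercive, so an order that holds on a strip around the interface propagates to
the whole space by a maximum principle. In particular the order holds for every large
translation. For an ordered translation the differences are supersolutions of a linear equation, so
a quantitative strong maximum principle bounds them away from zero on the strip, and nearby
translations are ordered as well. The half-space of translations crossing the interface in the
positive direction being connected, all of them are ordered. Applied to the difference quotients
along `ν`, the same quantitative principle makes the derivative of `u` positive everywhere as soon
as it is positive somewhere; for `v`, exchange the components and reverse the direction.
-/

open scoped RealInnerProductSpace
open Filter

noncomputable section

/-- The Laplacian of `f : ℝ^N → ℝ`, as the sum of the pure second partial
derivatives in the coordinate directions. -/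
def lap (N : ℕ) (f : EuclideanSpace ℝ (Fin N) → ℝ) (x : EuclideanSpace ℝ (Fin N)) : ℝ :=
  ∑ i : Fin N,
    fderiv ℝ (fun y => fderiv ℝ f y (EuclideanSpace.single i 1)) x (EuclideanSpace.single i 1)

/-- `(u, v)` is a classical solution of the system `(P_Λ)` on `ℝ^N`:
`u, v` are `C²` and `-Δu = u - u³ - Λ u v²`, `-Δv = v - v³ - Λ u² v` pointwise. -/
def IsSolution (N : ℕ) (Λ : ℝ) (u v : EuclideanSpace ℝ (Fin N) → ℝ) : Prop :=
  ContDiff ℝ 2 u ∧ ContDiff ℝ 2 v ∧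
  (∀ x, -lap N u x = u x - (u x) ^ 3 - Λ * u x * (v x) ^ 2) ∧
  (∀ x, -lap N v x = v x - (v x) ^ 3 - Λ * (u x) ^ 2 * v x)

/-- Condition `(h∞)`: `u → 1`, `v → 0` as `x_N → +∞` and `u → 0`, `v → 1` as
`x_N → -∞`, uniformly with respect to `x' ∈ ℝ^{N-1}` (the dimension is `N + 1`). -/
def Hinf (N : ℕ) (u v : EuclideanSpace ℝ (Fin (N + 1)) → ℝ) : Prop :=
  (∀ ε : ℝ, 0 < ε → ∃ M : ℝ, ∀ x : EuclideanSpace ℝ (Fin (N + 1)),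
    M ≤ x (Fin.last N) → |u x - 1| < ε ∧ |v x| < ε) ∧
  (∀ ε : ℝ, 0 < ε → ∃ M : ℝ, ∀ x : EuclideanSpace ℝ (Fin (N + 1)),
    x (Fin.last N) ≤ M → |u x| < ε ∧ |v x - 1| < ε)

section

open scoped Laplacian Topology
open Module InnerProductSpace Metric Set

/-! ### Laplacians of composite functions -/

theorem deriv_deriv_nonneg_of_isLocalMin {f : ℝ → ℝ} {a : ℝ} (hmin : IsLocalMin f a)
    (hf : ContDiffAt ℝ 2 f a) : 0 ≤ deriv (deriv f) a := by
  by_contra! hneg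
  -- A negative second derivative makes `a` a local maximum as well, so `f` is constant near `a`.
  have hmax : IsLocalMin (fun t => -f t) a := by
    apply isLocalMin_of_deriv_deriv_pos
    · simpa only [deriv.fun_neg', deriv.fun_neg, Left.neg_pos_iff] using hneg
    · simpa only [deriv.fun_neg, neg_eq_zero] using hmin.deriv_eq_zero
    · exact hf.continuousAt.neg
  have hconst : f =ᶠ[𝓝 a] fun _ => f a := by
    filter_upwards [hmin, hmax] with t hle hge
    exact le_antisymm (neg_le_neg_iff.1 hge) hle
  have hzero : deriv (deriv f) a = 0 := by
    rw [hconst.deriv.deriv_eq]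
    simp only [deriv_const', deriv_const]
  exact hneg.ne hzero

variable {E : Type*} [NormedAddCommGroup E] [InnerProductSpace ℝ E]

theorem deriv_deriv_comp_line {f : E → ℝ} {x : E} (hf : ContDiffAt ℝ 2 f x) (e : E) :
    deriv (deriv fun t : ℝ => f (x + t • e)) 0 = iteratedFDeriv ℝ 2 f x ![e, e] := by
  have hline (t : ℝ) : HasDerivAt (fun t : ℝ => x + t • e) e t := by
    simpa only [id_eq, one_smul] using ((hasDerivAt_id t).smul_const e).const_add x
  have hx : x = x + (0 : ℝ) • e := by rw [zero_smul, add_zero]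
  have hfirst : (deriv fun t : ℝ => f (x + t • e)) =ᶠ[𝓝 0]
      fun t => fderiv ℝ f (x + t • e) e := by
    have hdiff : ∀ᶠ y in 𝓝 x, DifferentiableAt ℝ f y :=
      (hf.eventually (by simp)).mono fun y hy => hy.differentiableAt (by norm_num)
    rw [hx] at hdiff
    filter_upwards [(hline 0).continuousAt.eventually hdiff] with t ht
    exact (ht.hasFDerivAt.comp_hasDerivAt t (hline t)).deriv
  have hsecond : DifferentiableAt ℝ (fderiv ℝ f) x :=
    (hf.fderiv_right (m := 1) (by norm_num)).differentiableAt (by norm_num)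
  have hderiv : HasDerivAt (fun t : ℝ => fderiv ℝ f (x + t • e))
      (fderiv ℝ (fderiv ℝ f) x e) 0 :=
    hsecond.hasFDerivAt.comp_hasDerivAt_of_eq 0 (hline 0) hx
  have hderiv2 : HasDerivAt (fun t : ℝ => fderiv ℝ f (x + t • e) e)
      (fderiv ℝ (fderiv ℝ f) x e e) 0 :=
    (ContinuousLinearMap.apply ℝ ℝ e).hasFDerivAt.comp_hasDerivAt 0 hderiv
  rw [hfirst.deriv_eq, iteratedFDeriv_two_apply, hderiv2.deriv]
  rfl

theorem fderiv_fderiv_comp {q : E → ℝ} {x : E} {φ φ' : ℝ → ℝ} {φ'' : ℝ} (hq : ContDiffAt ℝ 2 q x)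
    (hφ : ∀ᶠ r in 𝓝 (q x), HasDerivAt φ (φ' r) r) (hφ' : HasDerivAt φ' φ'' (q x)) (e : E) :
    fderiv ℝ (fderiv ℝ fun z => φ (q z)) x e e =
      φ'' * fderiv ℝ q x e ^ 2 + φ' (q x) * fderiv ℝ (fderiv ℝ q) x e e := by
  have hfirst : fderiv ℝ (fun z => φ (q z)) =ᶠ[𝓝 x] (fun z => φ' (q z)) • fderiv ℝ q := by
    filter_upwards [hq.continuousAt.eventually hφ, hq.eventually (by simp)] with z hφz hqz
    exact (hφz.comp_hasFDerivAt z (hqz.differentiableAt (by norm_num)).hasFDerivAt).fderiv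
  have hDq : HasFDerivAt q (fderiv ℝ q x) x := (hq.differentiableAt (by norm_num)).hasFDerivAt
  have hDDq : DifferentiableAt ℝ (fderiv ℝ q) x :=
    (hq.fderiv_right (m := 1) (by norm_num)).differentiableAt (by norm_num)
  have hφq : HasFDerivAt (fun z => φ' (q z)) (φ'' • fderiv ℝ q x) x :=
    hφ'.comp_hasFDerivAt x hDq
  rw [hfirst.fderiv_eq, (hφq.smul hDDq.hasFDerivAt).fderiv]
  simp only [add_apply, smul_apply, ContinuousLinearMap.smulRight_apply, smul_eq_mul]
  ring

theorem hasFDerivAt_norm_sub_sq (x y : E) :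
    HasFDerivAt (fun z : E => ‖z - y‖ ^ 2) ((2 : ℝ) • innerSL ℝ (x - y)) x := by
  rw [ofNat_smul_eq_nsmul]
  simpa only [ContinuousLinearMap.comp_id, id_eq] using ((hasFDerivAt_id x).sub_const y).norm_sq

theorem exists_pos_eventually_forall_mul_le_sub {g : E → ℝ} {y ν : E} (hg : ContDiffAt ℝ 1 g y)
    (hpos : 0 < fderiv ℝ g y ν) :
    ∃ r > 0, ∀ᶠ t in 𝓝[>] (0 : ℝ), ∀ z ∈ Metric.closedBall y r,
      fderiv ℝ g y ν / 2 * t ≤ g (z + t • ν) - g z := by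
  have hν : 0 < ‖ν‖ := norm_pos_iff.2 fun h => hpos.ne' (by rw [h, map_zero])
  have hstrict := (hg.hasStrictFDerivAt one_ne_zero).isLittleO.def
    (by positivity : 0 < fderiv ℝ g y ν / (2 * ‖ν‖))
  have hmap : Tendsto (fun p : E × ℝ => (p.1 + p.2 • ν, p.1)) (𝓝 y ×ˢ 𝓝[>] 0) (𝓝 (y, y)) := by
    refine (Continuous.tendsto' (by fun_prop) (y, 0) (y, y) (by simp)).mono_left ?_
    rw [nhds_prod_eq]
    exact prod_mono_right _ nhdsWithin_le_nhds
  obtain ⟨r, hr, T, hT, hrT⟩ := Metric.eventually_nhds_prod_iff.1 (hmap.eventually hstrict)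
  refine ⟨r / 2, half_pos hr, ?_⟩
  filter_upwards [hT, self_mem_nhdsWithin] with t ht ht₀ z hz
  have happrox := hrT ((Metric.mem_closedBall.1 hz).trans_lt (half_lt_self hr)) ht
  simp only [add_sub_cancel_left, map_smul, smul_eq_mul, norm_smul, Real.norm_eq_abs,
    abs_of_pos (Set.mem_Ioi.1 ht₀)] at happrox
  have herror : fderiv ℝ g y ν / (2 * ‖ν‖) * (t * ‖ν‖) = fderiv ℝ g y ν / 2 * t := by field_simp
  rw [herror] at happrox
  linarith [(abs_le.1 happrox).1]

variable [FiniteDimensional ℝ E]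

theorem laplacian_nonneg_of_isLocalMin {f : E → ℝ} {x : E} (hmin : IsLocalMin f x)
    (hf : ContDiffAt ℝ 2 f x) : 0 ≤ Δ f x := by
  rw [laplacian_eq_iteratedFDeriv_stdOrthonormalBasis]
  refine Finset.sum_nonneg fun i _ => ?_
  rw [← deriv_deriv_comp_line hf]
  have hx : x + (0 : ℝ) • stdOrthonormalBasis ℝ E i = x := by rw [zero_smul, add_zero]
  have hline : ContDiff ℝ 2 fun t : ℝ => x + t • stdOrthonormalBasis ℝ E i := by fun_prop
  refine deriv_deriv_nonneg_of_isLocalMin ?_ (ContDiffAt.comp 0 (by rwa [hx]) hline.contDiffAt)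
  rw [← hx] at hmin
  exact hmin.comp_continuous (g := fun t : ℝ => x + t • stdOrthonormalBasis ℝ E i)
    hline.continuous.continuousAt

theorem laplacian_le_laplacian_of_eventuallyLE {f g : E → ℝ} {x : E}
    (hf : ContDiffAt ℝ 2 f x) (hg : ContDiffAt ℝ 2 g x) (hle : f ≤ᶠ[𝓝 x] g) (heq : f x = g x) :
    Δ f x ≤ Δ g x := by
  have hmin : IsLocalMin (g - f) x := by
    filter_upwards [hle] with y hy
    simpa only [Pi.sub_apply, heq, sub_self, sub_nonneg] using hy
  have hnonneg := laplacian_nonneg_of_isLocalMin hmin (hg.sub hf)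
  rwa [hg.laplacian_sub hf, sub_nonneg] at hnonneg

theorem laplacian_comp_add_right (f : E → ℝ) (a x : E) :
    Δ (fun y => f (y + a)) x = Δ f (x + a) := by
  simp only [laplacian_eq_iteratedFDeriv_stdOrthonormalBasis, iteratedFDeriv_comp_add_right]

theorem laplacian_comp_linearIsometryEquiv (f : E → ℝ) (A : E ≃ₗᵢ[ℝ] E) (x : E) :
    Δ (fun y => f (A y)) x = Δ f (A x) := by
  rw [laplacian_eq_iteratedFDeriv_stdOrthonormalBasis,
    laplacian_eq_iteratedFDeriv_orthonormalBasis f ((stdOrthonormalBasis ℝ E).map A)]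
  refine Finset.sum_congr rfl fun i _ => ?_
  have hcomp := A.toContinuousLinearEquiv.iteratedFDerivWithin_comp_right f uniqueDiffOn_univ
    (Set.mem_univ (A x)) 2
  simp only [Set.preimage_univ, iteratedFDerivWithin_univ] at hcomp
  refine (DFunLike.congr_fun hcomp _).trans ?_
  rw [ContinuousMultilinearMap.compContinuousLinearMap_apply]
  refine congrArg (iteratedFDeriv ℝ 2 f (A x)) (funext fun j => ?_)
  fin_cases j <;> rfl

theorem laplacian_comp {q : E → ℝ} {x : E} {φ φ' : ℝ → ℝ} {φ'' : ℝ} (hq : ContDiffAt ℝ 2 q x)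
    (hφ : ∀ᶠ r in 𝓝 (q x), HasDerivAt φ (φ' r) r) (hφ' : HasDerivAt φ' φ'' (q x)) :
    Δ (fun z => φ (q z)) x = φ'' * ‖fderiv ℝ q x‖ ^ 2 + φ' (q x) * Δ q x := by
  simp only [laplacian_eq_iteratedFDeriv_stdOrthonormalBasis, iteratedFDeriv_two_apply,
    (stdOrthonormalBasis ℝ E).norm_dual, Finset.mul_sum, ← Finset.sum_add_distrib]
  exact Finset.sum_congr rfl fun i _ => fderiv_fderiv_comp hq hφ hφ' _

theorem laplacian_norm_sub_sq (x y : E) :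
    Δ (fun z : E => ‖z - y‖ ^ 2) x = 2 * finrank ℝ E := by
  have hfirst : fderiv ℝ (fun z : E => ‖z - y‖ ^ 2) = fun z => (2 : ℝ) • innerSL ℝ (z - y) :=
    funext fun z => (hasFDerivAt_norm_sub_sq z y).fderiv
  have hsecond : HasFDerivAt (fun z : E => (2 : ℝ) • innerSL ℝ (z - y))
      ((2 : ℝ) • (innerSL ℝ : E →L[ℝ] E →L[ℝ] ℝ)) x :=
    ((innerSL ℝ).hasFDerivAt.comp x ((hasFDerivAt_id x).sub_const y)).const_smul (2 : ℝ)
  have hdiag (i) : fderiv ℝ (fderiv ℝ fun z : E => ‖z - y‖ ^ 2) x (stdOrthonormalBasis ℝ E i)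
      (stdOrthonormalBasis ℝ E i) = 2 := by
    rw [hfirst, hsecond.fderiv]
    change 2 * ⟪stdOrthonormalBasis ℝ E i, stdOrthonormalBasis ℝ E i⟫ = 2
    rw [real_inner_self_eq_norm_sq, OrthonormalBasis.norm_eq_one, one_pow, mul_one]
  simp [laplacian_eq_iteratedFDeriv_stdOrthonormalBasis, iteratedFDeriv_two_apply, hdiag, mul_comm]

theorem laplacian_comp_norm_sub_sq {φ φ' : ℝ → ℝ} {φ'' : ℝ} {x y : E}
    (hφ : ∀ᶠ r in 𝓝 (‖x - y‖ ^ 2), HasDerivAt φ (φ' r) r)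
    (hφ' : HasDerivAt φ' φ'' (‖x - y‖ ^ 2)) :
    Δ (fun z => φ (‖z - y‖ ^ 2)) x =
      4 * ‖x - y‖ ^ 2 * φ'' + 2 * finrank ℝ E * φ' (‖x - y‖ ^ 2) := by
  have hq : ContDiffAt ℝ 2 (fun z : E => ‖z - y‖ ^ 2) x :=
    ((contDiff_id.sub contDiff_const).norm_sq ℝ).contDiffAt
  rw [laplacian_comp hq hφ hφ', laplacian_norm_sub_sq, (hasFDerivAt_norm_sub_sq x y).fderiv,
    norm_smul, innerSL_apply_norm, Real.norm_ofNat]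
  ring

theorem two_mul_mul_laplacian_le_laplacian_sq {f : E → ℝ} {x : E} (hf : ContDiffAt ℝ 2 f x) :
    2 * f x * Δ f x ≤ Δ (fun z => f z ^ 2) x := by
  have hsq (r : ℝ) : HasDerivAt (fun r : ℝ => r ^ 2) (2 * r) r := by
    simpa using hasDerivAt_pow 2 r
  have hlin (r : ℝ) : HasDerivAt (fun r : ℝ => 2 * r) 2 r := by
    simpa using (hasDerivAt_id r).const_mul (2 : ℝ)
  rw [laplacian_comp hf (.of_forall hsq) (hlin _)]
  exact le_add_of_nonneg_left (by positivity)

theorem laplacian_comp_clm {φ φ' : ℝ → ℝ} {φ'' : ℝ} {ℓ : E →L[ℝ] ℝ} {x : E}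
    (hφ : ∀ᶠ r in 𝓝 (ℓ x), HasDerivAt φ (φ' r) r) (hφ' : HasDerivAt φ' φ'' (ℓ x)) :
    Δ (fun z => φ (ℓ z)) x = φ'' * ‖ℓ‖ ^ 2 := by
  have hfirst : fderiv ℝ ℓ = fun _ => ℓ := by
    funext z
    exact ℓ.fderiv
  have hzero : Δ (fun z => ℓ z) x = 0 := by
    simp only [laplacian_eq_iteratedFDeriv_stdOrthonormalBasis, iteratedFDeriv_two_apply, hfirst,
      fderiv_fun_const, Pi.zero_apply, zero_apply, Finset.sum_const_zero]
  rw [laplacian_comp ℓ.contDiff.contDiffAt hφ hφ', hzero, ℓ.fderiv, mul_zero, add_zero]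

/-! ### Maximum principles on the whole space -/

theorem exists_forall_add_norm_sub_sq_le {S : Set E} (hS : IsClosed S) {m : E → ℝ}
    (hm : ContinuousOn m S) {b : ℝ} (hb : ∀ x ∈ S, b ≤ m x) {x₀ : E} (hx₀ : x₀ ∈ S) {δ : ℝ}
    (hδ : 0 < δ) :
    ∃ p ∈ S, ∀ x ∈ S, m p + δ * ‖p - x₀‖ ^ 2 ≤ m x + δ * ‖x - x₀‖ ^ 2 := by
  have hcoercive : Tendsto (fun x => b + δ * ‖x - x₀‖ ^ 2) (cocompact E) atTop := by
    refine tendsto_atTop_add_const_left _ b (Tendsto.const_mul_atTop hδ ?_)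
    refine (tendsto_pow_atTop two_ne_zero).comp ?_
    simpa only [dist_eq_norm] using tendsto_dist_right_cocompact_atTop x₀
  have hcont : ContinuousOn (fun x => m x + δ * ‖x - x₀‖ ^ 2) S := by fun_prop
  refine hcont.exists_isMinOn' hS hx₀ ?_
  filter_upwards [(hcoercive.eventually_ge_atTop _).filter_mono inf_le_left,
    mem_inf_of_right (mem_principal_self S)] with x hx hxS
  exact hx.trans (by gcongr; exact hb x hxS)

-- The penalty `δ * ‖x - x₀‖ ^ 2` makes the infimum attained, and it vanishes at `x₀`.
theorem exists_le_and_forall_norm_fderiv_sq_le_and_neg_le_laplacian {S : Set E} (hS : IsClosed S)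
    {m : E → ℝ} (hm : ContinuousOn m S) {b : ℝ} (hb : ∀ x ∈ S, b ≤ m x) {x₀ : E} (hx₀ : x₀ ∈ S)
    {ε : ℝ} (hε : 0 < ε) :
    ∃ p ∈ S, m p ≤ m x₀ ∧ (S ∈ 𝓝 p → ∀ f : E → ℝ, ContDiffAt ℝ 2 f p → m ≤ᶠ[𝓝 p] f →
      f p = m p → ‖fderiv ℝ f p‖ ^ 2 ≤ ε ∧ -ε ≤ Δ f p) := by
  have hgap : 0 ≤ m x₀ - b := sub_nonneg.2 (hb x₀ hx₀)
  obtain ⟨δ, hδ, hδε⟩ : ∃ δ > 0, δ * (2 * finrank ℝ E + 4 * (m x₀ - b)) ≤ ε := by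
    refine ⟨ε / (2 * finrank ℝ E + 4 * (m x₀ - b) + 1), by positivity, ?_⟩
    rw [div_mul_eq_mul_div, div_le_iff₀ (by positivity)]
    linarith
  obtain ⟨p, hpS, hp⟩ := exists_forall_add_norm_sub_sq_le hS hm hb hx₀ hδ
  have hpx₀ : m p + δ * ‖p - x₀‖ ^ 2 ≤ m x₀ := by
    simpa only [sub_self, norm_zero, zero_pow two_ne_zero, mul_zero, add_zero] using hp x₀ hx₀
  refine ⟨p, hpS, le_of_add_le_of_nonneg_left hpx₀ (by positivity), fun hSp f hf hle heq => ?_⟩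
  set g : E → ℝ := fun x => m p + δ * ‖p - x₀‖ ^ 2 - δ * ‖x - x₀‖ ^ 2 with hg
  have hparabola (r : ℝ) : HasDerivAt (fun r => m p + δ * ‖p - x₀‖ ^ 2 - δ * r) (-δ) r := by
    simpa using ((hasDerivAt_id r).const_mul δ).const_sub (m p + δ * ‖p - x₀‖ ^ 2)
  have hgC : ContDiff ℝ 2 g :=
    contDiff_const.sub (contDiff_const.mul ((contDiff_id.sub contDiff_const).norm_sq ℝ))
  have hgf : g ≤ᶠ[𝓝 p] f := by
    filter_upwards [hSp, hle] with x hx hfx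
    linarith [hp x hx]
  have hgp : g p = f p := by rw [heq, hg]; ring
  have hfderiv : fderiv ℝ f p = fderiv ℝ g p := by
    have hmin : IsLocalMin (f - g) p := by
      filter_upwards [hgf] with x hx
      simpa only [Pi.sub_apply, hgp, sub_self, sub_nonneg] using hx
    rw [← sub_eq_zero, ← fderiv_sub (hf.differentiableAt two_ne_zero)
      (hgC.differentiable two_ne_zero p), hmin.fderiv_eq_zero]
  constructor
  · have hDg : HasFDerivAt g (-δ • (2 : ℝ) • innerSL ℝ (p - x₀)) p :=
      (hparabola _).comp_hasFDerivAt p (hasFDerivAt_norm_sub_sq p x₀)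
    rw [hfderiv, hDg.fderiv, norm_smul, norm_smul, innerSL_apply_norm, norm_neg, Real.norm_ofNat,
      Real.norm_of_nonneg hδ.le]
    nlinarith [hb p hpS]
  · have hΔ := laplacian_le_laplacian_of_eventuallyLE hgC.contDiffAt hf hgf hgp
    rw [laplacian_comp_norm_sub_sq (.of_forall hparabola) (hasDerivAt_const _ _)] at hΔ
    nlinarith

theorem laplacian_zpow {q : E → ℝ} {x : E} (hq : ContDiffAt ℝ 2 q x) (hx : q x ≠ 0) (k : ℤ) :
    Δ (fun z => q z ^ k) x =
      k * (k - 1) * q x ^ (k - 2) * ‖fderiv ℝ q x‖ ^ 2 + k * q x ^ (k - 1) * Δ q x := by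
  have hfirst : ∀ᶠ r in 𝓝 (q x), HasDerivAt (fun r : ℝ => r ^ k) (k * r ^ (k - 1)) r :=
    (eventually_ne_nhds hx).mono fun r hr => hasDerivAt_zpow k r (.inl hr)
  have hsecond := (hasDerivAt_zpow (k - 1) (q x) (.inl hx)).const_mul (k : ℝ)
  rw [laplacian_comp hq hfirst hsecond, sub_sub, one_add_one_eq_two]
  push_cast
  ring

-- Keller–Osserman: `G = w ^ (-1/2)` is bounded below, and `w = G ^ (-2)` turns the lower bound on
-- `Δ w` into `κ ≤ 6 * ‖∇G‖ ^ 2 - 2 * G * Δ G`.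
theorem nonpos_of_mul_sq_le_laplacian {w : E → ℝ} (hw : ContDiff ℝ 2 w) {κ : ℝ} (hκ : 0 < κ)
    (hΔ : ∀ x, 0 < w x → κ * w x ^ 2 ≤ Δ w x) (x : E) : w x ≤ 0 := by
  by_contra! hx
  set G : E → ℝ := fun y => (√(w y))⁻¹
  have hGC {y : E} (hy : 0 < w y) : ContDiffAt ℝ 2 G y :=
    (hw.contDiffAt.sqrt hy.ne').inv (Real.sqrt_pos.2 hy).ne'
  have hGpos {y : E} (hy : 0 < w y) : 0 < G y := inv_pos.2 (Real.sqrt_pos.2 hy)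
  have hGw {y : E} (hy : 0 < w y) : w y = G y ^ (-2 : ℤ) := by
    rw [zpow_neg, inv_zpow, inv_inv, zpow_ofNat, Real.sq_sqrt hy.le]
  have hGx := hGpos hx
  have hpos {y : E} (hy : w x / 2 ≤ w y) : 0 < w y := (half_pos hx).trans_le hy
  obtain ⟨p, hpS, hpx, hp⟩ := exists_le_and_forall_norm_fderiv_sq_le_and_neg_le_laplacian
    (S := {y | w x / 2 ≤ w y}) (isClosed_le continuous_const hw.continuous)
    (fun y hy => (hGC (hpos hy)).continuousAt.continuousWithinAt)
    (fun y hy => (hGpos (hpos hy)).le) (half_le_self hx.le)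
    (by positivity : 0 < κ / (2 * (6 + 2 * G x)))
  have hwp : 0 < w p := hpos hpS
  have hGp := hGpos hwp
  have hxp : w x ≤ w p :=
    (Real.sqrt_le_sqrt_iff hwp.le).1
      ((inv_le_inv₀ (Real.sqrt_pos.2 hwp) (Real.sqrt_pos.2 hx)).1 hpx)
  have hnhds : {y | w x / 2 ≤ w y} ∈ 𝓝 p :=
    hw.continuous.continuousAt.eventually (eventually_ge_nhds ((half_lt_self hx).trans_le hxp))
  obtain ⟨hgrad, hΔG⟩ := hp hnhds G (hGC hwp) .rfl rfl
  have hchain := hΔ p hwp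
  rw [(laplacian_congr_nhds (by filter_upwards [hnhds] with y hy using hGw (hpos hy))).eq_of_nhds,
    laplacian_zpow (hGC hwp) hGp.ne', hGw hwp] at hchain
  have hκp : κ ≤ 6 * ‖fderiv ℝ G p‖ ^ 2 - 2 * G p * Δ G p := by
    have hscaled := mul_le_mul_of_nonneg_left hchain (pow_pos hGp 4).le
    push_cast at hscaled
    field_simp at hscaled
    norm_num at hscaled
    linarith
  have hε : κ / (2 * (6 + 2 * G x)) * (6 + 2 * G x) = κ / 2 := by field_simp
  nlinarith

theorem nonneg_of_laplacian_le_of_le {w z : E → ℝ} (hw : ContDiff ℝ 2 w) (hz : ContDiff ℝ 2 z)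
    {b κ : ℝ} (hκ : 0 < κ) (hbw : ∀ x, b ≤ w x) (hbz : ∀ x, b ≤ z x)
    (hΔw : ∀ x, w x < 0 → w x ≤ z x → Δ w x ≤ κ * w x)
    (hΔz : ∀ x, z x < 0 → z x ≤ w x → Δ z x ≤ κ * z x) (x : E) : 0 ≤ w x ∧ 0 ≤ z x := by
  rw [← le_min_iff]
  by_contra! hneg
  obtain ⟨p, -, hpx, hp⟩ := exists_le_and_forall_norm_fderiv_sq_le_and_neg_le_laplacian
    (S := univ) (m := fun y => min (w y) (z y)) isClosed_univ
    (hw.continuous.min hz.continuous).continuousOn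
    (fun y _ => le_min (hbw y) (hbz y)) (mem_univ x) (ε := -(κ * min (w x) (z x)) / 2)
    (by nlinarith)
  have hκp : κ * min (w p) (z p) ≤ κ * min (w x) (z x) := by gcongr
  have hκx : κ * min (w x) (z x) < 0 := mul_neg_of_pos_of_neg hκ hneg
  rcases le_total (w p) (z p) with hwz | hzw
  · have hΔp := (hp univ_mem w hw.contDiffAt (.of_forall fun y => min_le_left _ _)
      (min_eq_left hwz).symm).2
    rw [min_eq_left hwz] at hκp hpx
    linarith [hΔw p (hpx.trans_lt hneg) hwz]
  · have hΔp := (hp univ_mem z hz.contDiffAt (.of_forall fun y => min_le_right _ _)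
      (min_eq_right hzw).symm).2
    rw [min_eq_right hzw] at hκp hpx
    linarith [hΔz p (hpx.trans_lt hneg) hzw]

/-! ### Quantitative strong maximum principle -/

theorem le_of_mul_lt_laplacian {S : Set E} (hS : IsCompact S) {w φ : E → ℝ} (hw : ContDiff ℝ 2 w)
    (hφ : ContDiff ℝ 2 φ) {K : ℝ} (hK : 0 ≤ K) (hΔw : ∀ x, Δ w x ≤ K * w x)
    (hcases : ∀ x ∈ S, φ x ≤ w x ∨ S ∈ 𝓝 x ∧ K * φ x < Δ φ x) {x : E} (hx : x ∈ S) :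
    φ x ≤ w x := by
  obtain ⟨p, hpS, hp⟩ := hS.exists_isMinOn (f := w - φ) ⟨x, hx⟩
    (hw.sub hφ).continuous.continuousOn
  suffices hle : φ p ≤ w p from sub_nonneg.1 ((sub_nonneg.2 hle).trans (hp hx))
  by_contra! hlt
  obtain ⟨hSp, hΔφ⟩ := (hcases p hpS).resolve_left hlt.not_ge
  have hmin := laplacian_nonneg_of_isLocalMin (hp.isLocalMin hSp) (hw.sub hφ).contDiffAt
  rw [hw.contDiffAt.laplacian_sub hφ.contDiffAt, sub_nonneg] at hmin
  have hKlt : K * w p ≤ K * φ p := by gcongr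
  linarith [hΔw p]

theorem laplacian_exp_neg_mul_norm_sub_sq (α b δ : ℝ) (x y : E) :
    Δ (fun z => δ * (Real.exp (-α * ‖z - y‖ ^ 2) - b)) x =
      δ * Real.exp (-α * ‖x - y‖ ^ 2) * (4 * α ^ 2 * ‖x - y‖ ^ 2 - 2 * finrank ℝ E * α) := by
  have hexp (r : ℝ) : HasDerivAt (fun r => Real.exp (-α * r)) (Real.exp (-α * r) * -α) r := by
    simpa using ((hasDerivAt_id r).const_mul (-α)).exp
  have hfirst (r : ℝ) := ((hexp r).sub_const b).const_mul δ
  have hsecond (r : ℝ) := ((hexp r).mul_const (-α)).const_mul δ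
  rw [laplacian_comp_norm_sub_sq (.of_forall hfirst) (hsecond _)]
  ring

theorem mul_exp_sub_exp_le_of_laplacian_le {K r α : ℝ} (hK : 0 ≤ K) (hr : 0 < r) (hα : 1 ≤ α)
    (hαr : 2 * finrank ℝ E + K + 1 ≤ 4 * α * r ^ 2) {w : E → ℝ} (hw : ContDiff ℝ 2 w)
    (hw₀ : ∀ x, 0 ≤ w x) (hΔw : ∀ x, Δ w x ≤ K * w x) {y : E} {δ : ℝ} (hδ : 0 < δ)
    (hball : ∀ x ∈ closedBall y r, δ ≤ w x) {ρ : ℝ} {x : E} (hx : x ∈ closedBall y ρ) :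
    δ * (Real.exp (-α * ‖x - y‖ ^ 2) - Real.exp (-α * ρ ^ 2)) ≤ w x := by
  have hb := Real.exp_pos (-α * ρ ^ 2)
  refine le_of_mul_lt_laplacian (φ := fun x => δ * (Real.exp (-α * ‖x - y‖ ^ 2) - _))
    (isCompact_closedBall y ρ) hw (contDiff_const.mul ((contDiff_const.mul
      ((contDiff_id.sub contDiff_const).norm_sq ℝ)).exp.sub contDiff_const)) hK hΔw
    (fun z hz => ?_) hx
  rw [mem_closedBall_iff_norm] at hz
  rcases hz.eq_or_lt with hboundary | hinterior
  · left
    simpa only [hboundary, sub_self, mul_zero] using hw₀ z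
  rcases le_or_gt ‖z - y‖ r with hinner | houter
  · left
    have hexp : Real.exp (-α * ‖z - y‖ ^ 2) ≤ 1 := by
      rw [Real.exp_le_one_iff]
      nlinarith [sq_nonneg ‖z - y‖]
    nlinarith [hball z (mem_closedBall_iff_norm.2 hinner)]
  · right
    refine ⟨closedBall_mem_nhds_of_mem (mem_ball_iff_norm.2 hinterior), ?_⟩
    rw [laplacian_exp_neg_mul_norm_sub_sq]
    have hsq : r ^ 2 ≤ ‖z - y‖ ^ 2 := by gcongr
    have hrate : K < 4 * α ^ 2 * ‖z - y‖ ^ 2 - 2 * finrank ℝ E * α := by nlinarith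
    calc K * (δ * (Real.exp (-α * ‖z - y‖ ^ 2) - Real.exp (-α * ρ ^ 2)))
        ≤ δ * Real.exp (-α * ‖z - y‖ ^ 2) * K := by
          nlinarith [mul_nonneg (mul_nonneg hK hδ.le) hb.le]
      _ < _ := by gcongr

-- The Gaussian `exp (-α * ‖x - y‖ ^ 2)` is a strict subsolution outside the ball of radius `r`
-- once `α` is large.
theorem exists_pos_forall_mul_le_of_laplacian_le {K r R : ℝ} (hK : 0 ≤ K) (hr : 0 < r)
    (hR : 0 ≤ R) :
    ∃ c > 0, ∀ w : E → ℝ, ContDiff ℝ 2 w → (∀ x, 0 ≤ w x) → (∀ x, Δ w x ≤ K * w x) →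
      ∀ (y : E) (δ : ℝ), 0 < δ → (∀ x ∈ closedBall y r, δ ≤ w x) →
        ∀ x ∈ closedBall y R, c * δ ≤ w x := by
  obtain ⟨α, hα, hαr⟩ : ∃ α ≥ (1 : ℝ), 2 * finrank ℝ E + K + 1 ≤ 4 * α * r ^ 2 := by
    refine ⟨(2 * finrank ℝ E + K + 1) / (4 * r ^ 2) + 1, le_add_of_nonneg_left (by positivity), ?_⟩
    rw [mul_right_comm, mul_add, mul_div_cancel₀ _ (by positivity)]
    exact le_add_of_nonneg_right (by positivity)
  refine ⟨Real.exp (-α * R ^ 2) - Real.exp (-α * (R + 1) ^ 2), ?_,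
    fun w hw hw₀ hΔw y δ hδ hball x hx => ?_⟩
  · rw [gt_iff_lt, sub_pos, Real.exp_lt_exp]
    nlinarith
  refine le_trans ?_ (mul_exp_sub_exp_le_of_laplacian_le hK hr hα hαr hw hw₀ hΔw hδ hball
    (closedBall_subset_closedBall (le_add_of_nonneg_right zero_le_one) hx))
  rw [mem_closedBall_iff_norm] at hx
  rw [mul_comm]
  simp only [neg_mul]
  gcongr

/-! ### Lipschitz bound from bounded oscillation and bounded Laplacian -/

theorem nonneg_of_laplacian_le_neg {S : Set E} (hS : IsClosed S) {w : E → ℝ}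
    (hw : ContDiff ℝ 2 w) {b κ : ℝ} (hκ : 0 < κ) (hb : ∀ x ∈ S, b ≤ w x)
    (hcases : ∀ x ∈ S, 0 ≤ w x ∨ S ∈ 𝓝 x ∧ Δ w x ≤ -κ) {x : E} (hx : x ∈ S) : 0 ≤ w x := by
  by_contra! hneg
  obtain ⟨p, hpS, hpx, hp⟩ := exists_le_and_forall_norm_fderiv_sq_le_and_neg_le_laplacian hS
    hw.continuous.continuousOn hb hx (half_pos hκ)
  obtain ⟨hSp, hΔ⟩ := (hcases p hpS).resolve_left (hpx.trans_lt hneg).not_ge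
  linarith [(hp hSp w hw.contDiffAt .rfl rfl).2]

-- On the slab `0 ≤ ⟪e, x⟫ ≤ 1`, compare `F` with a concave profile of `⟪e, x⟫`.
theorem le_mul_inner_of_neg_le_laplacian {F : E → ℝ} (hF : ContDiff ℝ 2 F) {M K : ℝ} (hM : 0 ≤ M)
    (hK : 0 ≤ K) (hFM : ∀ x, F x ≤ M) (hΔ : ∀ x, -K ≤ Δ F x) {e : E} (he : ‖e‖ = 1)
    (hF₀ : ∀ x, ⟪e, x⟫ = 0 → F x ≤ 0) {x : E} (hx : ⟪e, x⟫ ∈ Icc (0 : ℝ) 1) :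
    F x ≤ (M + (K / 2 + 1)) * ⟪e, x⟫ := by
  set a := K / 2 + 1 with ha
  set P : ℝ → ℝ := fun t => (M + a) * t - a * t ^ 2 with hP
  have hP_nonneg {t : ℝ} (ht : t ∈ Icc (0 : ℝ) 1) : 0 ≤ P t := by
    simp only [hP]
    nlinarith [ht.1, ht.2, mul_nonneg hM ht.1, mul_nonneg ht.1 (sub_nonneg.2 ht.2)]
  have hPC : ContDiff ℝ 2 fun z => P (innerSL ℝ e z) := by fun_prop
  have hfirst (t : ℝ) : HasDerivAt P (M + a - a * (2 * t)) t := by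
    simpa using ((hasDerivAt_id' t).const_mul (M + a)).fun_sub
      ((hasDerivAt_pow 2 t).const_mul a)
  have hsecond (t : ℝ) : HasDerivAt (fun t => M + a - a * (2 * t)) (-(a * 2)) t := by
    simpa using (((hasDerivAt_id t).const_mul 2).const_mul a).const_sub (M + a)
  have hΔP (z : E) : Δ (fun z => P (innerSL ℝ e z)) z = -(a * 2) := by
    rw [laplacian_comp_clm (.of_forall hfirst) (hsecond _), innerSL_apply_norm, he, one_pow,
      mul_one]
  have hnonneg : 0 ≤ P ⟪e, x⟫ - F x := by
    refine nonneg_of_laplacian_le_neg (S := {z | ⟪e, z⟫ ∈ Icc (0 : ℝ) 1})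
      (w := (fun z => P (innerSL ℝ e z)) - F) (b := -M) (isClosed_Icc.preimage (by fun_prop))
      (hPC.sub hF) two_pos (fun z hz => ?_) (fun z hz => ?_) hx
    · exact (neg_le_neg (hFM z)).trans (le_sub_iff_add_le.2 (by simpa using hP_nonneg hz))
    rcases hz.1.eq_or_lt with hleft | hleft
    · left
      simp only [Pi.sub_apply, innerSL_apply_apply, ← hleft, hP]
      linarith [hF₀ z hleft.symm]
    rcases hz.2.eq_or_lt with hright | hright
    · left
      simp only [Pi.sub_apply, innerSL_apply_apply, hright, hP]
      linarith [hFM z]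
    refine .inr ⟨?_, ?_⟩
    · exact (by fun_prop : Continuous fun z => ⟪e, z⟫).continuousAt.preimage_mem_nhds
        (Icc_mem_nhds hleft hright)
    · rw [hPC.contDiffAt.laplacian_sub hF.contDiffAt, hΔP]
      linarith [hΔ z]
  simp only [hP] at hnonneg
  nlinarith

theorem sub_neg_le_of_abs_laplacian_le {u : E → ℝ} (hu : ContDiff ℝ 2 u) {M C : ℝ}
    (hosc : ∀ x y, u x - u y ≤ M) (hΔ : ∀ x, |Δ u x| ≤ C) {e : E} (he : ‖e‖ = 1) {s : ℝ}
    (hs : s ∈ Icc (0 : ℝ) 1) : u (s • e) - u (-(s • e)) ≤ (M + (C + 1)) * s := by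
  have hM : 0 ≤ M := by simpa only [sub_self] using hosc 0 0
  have hC : 0 ≤ C := (abs_nonneg _).trans (hΔ 0)
  set R := (ℝ ∙ e)ᗮ.reflection
  have hRfix {z : E} (hz : ⟪e, z⟫ = 0) : R z = z :=
    Submodule.reflection_mem_subspace_eq_self
      (Submodule.mem_orthogonal_singleton_iff_inner_right.2 hz)
  have hRe : R (s • e) = -(s • e) := by
    rw [map_smul, Submodule.reflection_orthogonalComplement_singleton_eq_neg, smul_neg]
  have hse : ⟪e, s • e⟫ = s := by
    rw [inner_smul_right, real_inner_self_eq_norm_sq, he, one_pow, mul_one]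
  have huR : ContDiff ℝ 2 fun z => u (R z) := hu.comp R.contDiff
  have hbound := le_mul_inner_of_neg_le_laplacian (F := u - fun z => u (R z)) (hu.sub huR) hM
    (K := 2 * C) (by positivity) (fun z => hosc z (R z)) (fun z => ?_) he
    (fun z hz => (by rw [Pi.sub_apply, hRfix hz, sub_self])) (x := s • e) (by rwa [hse])
  · rwa [Pi.sub_apply, hRe, hse, mul_div_cancel_left₀ C two_ne_zero] at hbound
  · rw [hu.contDiffAt.laplacian_sub huR.contDiffAt, laplacian_comp_linearIsometryEquiv]
    linarith [abs_le.1 (hΔ z), abs_le.1 (hΔ (R z))]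

theorem lipschitzWith_of_abs_laplacian_le {u : E → ℝ} (hu : ContDiff ℝ 2 u) {M C : ℝ}
    (hosc : ∀ x y, u x - u y ≤ M) (hΔ : ∀ x, |Δ u x| ≤ C) :
    LipschitzWith (Real.toNNReal (M + (C + 1))) u := by
  refine LipschitzWith.of_le_add_mul' _ fun x y => ?_
  have hM : 0 ≤ M := by simpa only [sub_self] using hosc x x
  have hC : 0 ≤ C := (abs_nonneg _).trans (hΔ x)
  rw [dist_eq_norm, ← sub_le_iff_le_add']
  rcases eq_or_ne x y with rfl | hxy
  · simp
  have hd : 0 < ‖x - y‖ := norm_sub_pos_iff.2 hxy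
  rcases le_or_gt (‖x - y‖ / 2) 1 with hnear | hfar
  · have hshift : ContDiff ℝ 2 fun z => u (z + (2⁻¹ : ℝ) • (x + y)) := by fun_prop
    have hbound := sub_neg_le_of_abs_laplacian_le hshift (fun _ _ => hosc _ _)
      (fun z => by rw [laplacian_comp_add_right]; exact hΔ _)
      (norm_smul_inv_norm (𝕜 := ℝ) (norm_pos_iff.1 hd)) ⟨by positivity, hnear⟩
    have hhalf : (‖x - y‖ / 2) • ‖x - y‖⁻¹ • (x - y) = (2⁻¹ : ℝ) • (x - y) := by
      rw [smul_smul]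
      congr 1
      field_simp
    have hx : (2⁻¹ : ℝ) • (x - y) + (2⁻¹ : ℝ) • (x + y) = x := by module
    have hy : -((2⁻¹ : ℝ) • (x - y)) + (2⁻¹ : ℝ) • (x + y) = y := by module
    simp only [RCLike.ofReal_real_eq_id, id_eq, hhalf, hx, hy] at hbound
    nlinarith
  · nlinarith [hosc x y]

/-! ### Differences of translates -/

theorem exists_pos_forall_le_of_uniformContinuous {w : E → ℝ} (hw : ContDiff ℝ 2 w)
    (hw₀ : ∀ x, 0 ≤ w x) {K : ℝ} (hK : 0 ≤ K) (hΔ : ∀ x, Δ w x ≤ K * w x)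
    (hwu : UniformContinuous w) {η R : ℝ} (hη : 0 < η) (hR : 0 ≤ R) :
    ∃ c > 0, ∀ y, η ≤ w y → ∀ x ∈ closedBall y R, c ≤ w x := by
  obtain ⟨r, hr, hwr⟩ := Metric.uniformContinuous_iff_le.1 hwu (η / 2) (half_pos hη)
  obtain ⟨c, hc, hbound⟩ := exists_pos_forall_mul_le_of_laplacian_le (E := E) hK hr hR
  refine ⟨c * (η / 2), by positivity, fun y hy =>
    hbound w hw hw₀ hΔ y (η / 2) (half_pos hη) fun x hx => ?_⟩
  linarith [(abs_le.1 (hwr hx)).1]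

theorem laplacian_translate_sub {g : E → ℝ} (hg : ContDiff ℝ 2 g) (a x : E) :
    Δ (fun x => g (x + a) - g x) x = Δ g (x + a) - Δ g x := by
  have hga : ContDiff ℝ 2 fun x => g (x + a) := by fun_prop
  rw [← laplacian_comp_add_right g a x]
  exact hga.contDiffAt.laplacian_sub hg.contDiffAt

-- Some step of the telescoping sum `g (y + n • a) - g y` is at least `η / n`.
theorem exists_pos_forall_le_translate_sub {g : E → ℝ} (hg : ContDiff ℝ 2 g)
    (hgu : UniformContinuous g) {a : E} (hmono : ∀ x, g x ≤ g (x + a)) {K : ℝ} (hK : 0 ≤ K)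
    (hΔ : ∀ x, Δ g (x + a) - Δ g x ≤ K * (g (x + a) - g x)) (n : ℕ) {η R : ℝ} (hη : 0 < η)
    (hR : 0 ≤ R) :
    ∃ c > 0, ∀ y, η ≤ g (y + n • a) - g y → ∀ x ∈ closedBall y R, c ≤ g (x + a) - g x := by
  obtain ⟨c, hc, hbound⟩ := exists_pos_forall_le_of_uniformContinuous
    (w := fun x => g (x + a) - g x) (by fun_prop) (fun x => sub_nonneg.2 (hmono x)) hK
    (fun x => (laplacian_translate_sub hg a x).trans_le (hΔ x))
    ((hgu.comp (uniformContinuous_id.add uniformContinuous_const)).sub hgu)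
    (η := η / (n + 1)) (R := R + n * ‖a‖) (by positivity) (by positivity)
  refine ⟨c, hc, fun y hy x hx => ?_⟩
  obtain ⟨j, hj, hstep⟩ : ∃ j ∈ Finset.range n,
      η / (n + 1) ≤ g (y + j • a + a) - g (y + j • a) := by
    by_contra! hsmall
    have htelescope : g (y + n • a) - g y ≤ n * (η / (n + 1)) := by
      calc g (y + n • a) - g y
          = ∑ j ∈ Finset.range n, (g (y + (j + 1) • a) - g (y + j • a)) := by
            rw [Finset.sum_range_sub fun j => g (y + j • a), zero_smul, add_zero]
        _ ≤ ∑ j ∈ Finset.range n, η / (n + 1) := by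
            refine Finset.sum_le_sum fun j hj => ?_
            rw [succ_nsmul, ← add_assoc]
            exact (hsmall j hj).le
        _ = n * (η / (n + 1)) := by rw [Finset.sum_const, Finset.card_range, nsmul_eq_mul]
    have hlt : n * (η / (n + 1)) < η := by
      rw [mul_div_assoc', div_lt_iff₀ (by positivity)]
      linarith
    linarith
  refine hbound _ hstep x ?_
  rw [mem_closedBall_iff_norm] at hx ⊢
  have hja : ‖j • a‖ ≤ n * ‖a‖ := by
    refine norm_nsmul_le.trans ?_
    gcongr
    exact (Finset.mem_range.1 hj).le
  calc ‖x - (y + j • a)‖ ≤ ‖x - y‖ + ‖j • a‖ := by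
        rw [← sub_sub]
        exact norm_sub_le _ _
    _ ≤ R + n * ‖a‖ := add_le_add hx hja

theorem fderiv_pos_of_forall_le_translate {g : E → ℝ} (hg : ContDiff ℝ 2 g) {ν : E} {K : ℝ}
    (hK : 0 ≤ K) (hmono : ∀ t > (0 : ℝ), ∀ x, g x ≤ g (x + t • ν))
    (hΔ : ∀ t > (0 : ℝ), ∀ x, Δ g (x + t • ν) - Δ g x ≤ K * (g (x + t • ν) - g x)) {y : E}
    (hy : 0 < fderiv ℝ g y ν) (x : E) : 0 < fderiv ℝ g x ν := by
  obtain ⟨r, hr, hnear⟩ :=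
    exists_pos_eventually_forall_mul_le_sub (hg.of_le one_le_two).contDiffAt hy
  obtain ⟨c, hc, hbound⟩ :=
    exists_pos_forall_mul_le_of_laplacian_le (E := E) (R := ‖x - y‖) hK hr (norm_nonneg _)
  have hslope :=
    ((hg.differentiable two_ne_zero x).hasFDerivAt.hasLineDerivAt ν).tendsto_slope_zero_right
  refine (by positivity : 0 < c * (fderiv ℝ g y ν / 2)).trans_le (ge_of_tendsto hslope ?_)
  filter_upwards [hnear, self_mem_nhdsWithin] with t ht ht₀
  have ht₀' : 0 < t := ht₀
  have hx := hbound (fun x => g (x + t • ν) - g x) (by fun_prop)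
    (fun x => sub_nonneg.2 (hmono t ht₀ x))
    (fun x => (laplacian_translate_sub hg (t • ν) x).trans_le (hΔ t ht₀ x)) y _ (by positivity) ht x
    (mem_closedBall_iff_norm.2 le_rfl)
  rw [smul_eq_mul, inv_mul_eq_div, le_div_iff₀ ht₀', mul_assoc]
  exact hx

/-! ### The system -/

/-- The right-hand side `a - a³ - Λ a b²` of the equation for the component `a` in `(P_Λ)`; the
equation for the other component has right-hand side `reaction Λ b a`. -/
def reaction (Λ a b : ℝ) : ℝ :=
  a - a ^ 3 - Λ * a * b ^ 2

theorem abs_reaction_le {Λ a b : ℝ} (hΛ : 0 ≤ Λ) (ha : a ∈ Icc (0 : ℝ) 1)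
    (hb : b ∈ Icc (0 : ℝ) 1) : |reaction Λ a b| ≤ 1 + Λ := by
  have ha₀ := ha.1
  have ha₃ : a ^ 3 ≤ 1 := pow_le_one₀ ha.1 ha.2
  have hab : a * b ^ 2 ≤ 1 := mul_le_one₀ ha.2 (by positivity) (pow_le_one₀ hb.1 hb.2)
  have hΛab : Λ * (a * b ^ 2) ≤ Λ * 1 := by gcongr
  have hnonneg : 0 ≤ a ^ 3 := by positivity
  have hΛnonneg : 0 ≤ Λ * (a * b ^ 2) := by positivity
  unfold reaction
  exact abs_le.2 ⟨by linarith [ha.1], by linarith [ha.2]⟩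

theorem neg_mul_sub_le_reaction_sub_reaction {Λ a b c d : ℝ} (hΛ : 0 ≤ Λ) (ha : 0 ≤ a)
    (hc : c ≤ 1) (hb : b ≤ 1) (hd : 0 ≤ d) (hac : a ≤ c) (hdb : d ≤ b) :
    -((Λ + 2) * (c - a)) ≤ reaction Λ c d - reaction Λ a b := by
  have hcoupling : 0 ≤ Λ * (a * ((b - d) * (b + d))) :=
    mul_nonneg hΛ (mul_nonneg ha (mul_nonneg (by linarith) (by linarith)))
  have hcubic : 0 ≤ (c - a) * (3 - (c ^ 2 + a * c + a ^ 2)) :=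
    mul_nonneg (by linarith) (by nlinarith)
  have hlinear : 0 ≤ Λ * ((c - a) * (1 - d ^ 2)) :=
    mul_nonneg hΛ (mul_nonneg (by linarith) (by nlinarith))
  unfold reaction
  linarith

theorem mul_sub_le_reaction_sub_reaction {Λ a b c d : ℝ} (hΛ : 0 ≤ Λ) (hb : 0 ≤ b) (hc : 0 ≤ c)
    (hd : 0 ≤ d) (hle : c - a ≤ b - d) :
    (-1 + (a ^ 2 + a * c + c ^ 2) + Λ * b ^ 2 - Λ * (c * (b + d))) * (a - c) ≤
      reaction Λ c d - reaction Λ a b := by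
  have hcoupling : 0 ≤ Λ * (c * (b + d)) * ((b - d) - (c - a)) :=
    mul_nonneg (by positivity) (sub_nonneg.2 hle)
  unfold reaction
  linarith

theorem mul_sub_le_reaction_sub_reaction_of_le_left {Λ κ a b c d : ℝ} (hΛ : 0 ≤ Λ) (hb : 0 ≤ b)
    (hc : 0 ≤ c) (hd : 0 ≤ d) (hb₁ : b ≤ 1) (hd₁ : d ≤ 1) (hca : c ≤ a) (hle : c - a ≤ b - d)
    (hκ : κ ≤ -1 + Λ * b ^ 2 - 2 * Λ * a) :
    κ * (a - c) ≤ reaction Λ c d - reaction Λ a b := by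
  refine le_trans ?_ (mul_sub_le_reaction_sub_reaction hΛ hb hc hd hle)
  have ha : 0 ≤ a := hc.trans hca
  have hcross : Λ * (c * (b + d)) ≤ Λ * (a * 2) := by
    gcongr
    linarith
  have hsquares : 0 ≤ a ^ 2 + a * c + c ^ 2 := by positivity
  exact mul_le_mul_of_nonneg_right (by linarith) (sub_nonneg.2 hca)

theorem mul_sub_le_reaction_sub_reaction_of_le_right {Λ κ a b c d : ℝ} (hΛ : 0 ≤ Λ) (hb : 0 ≤ b)
    (hc : 0 ≤ c) (hd : 0 ≤ d) (hab : a ^ 2 + b ^ 2 ≤ 1) (hca : c ≤ a) (hle : c - a ≤ b - d)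
    (hκ : κ ≤ -1 + 3 * c ^ 2 - Λ * (√(1 - c ^ 2) + d)) :
    κ * (a - c) ≤ reaction Λ c d - reaction Λ a b := by
  refine le_trans ?_ (mul_sub_le_reaction_sub_reaction hΛ hb hc hd hle)
  have hac : c ^ 2 ≤ a * c := by nlinarith
  have haa : c ^ 2 ≤ a ^ 2 := by gcongr
  have hb_sqrt : b ≤ √(1 - c ^ 2) := Real.le_sqrt_of_sq_le (by linarith)
  have hc₁ : c ≤ 1 := by nlinarith [sq_nonneg b]
  have hcross : Λ * (c * (b + d)) ≤ Λ * (1 * (√(1 - c ^ 2) + d)) := by gcongr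
  have hb₂ : 0 ≤ Λ * b ^ 2 := by positivity
  exact mul_le_mul_of_nonneg_right (by linarith) (sub_nonneg.2 hca)

/-- The translate of the state `(u, v)` by `a` is above `(u, v)`, in the order for which the
competitive system `(P_Λ)` is monotone: `u` increases and `v` decreases. -/
def IsOrderedTranslate {G : Type*} [Add G] (u v : G → ℝ) (a : G) : Prop :=
  ∀ x, u x ≤ u (x + a) ∧ v (x + a) ≤ v x

theorem IsOrderedTranslate.swap {G : Type*} [AddGroup G] {u v : G → ℝ} {a : G}
    (h : IsOrderedTranslate u v a) : IsOrderedTranslate v u (-a) := by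
  intro x
  simpa only [neg_add_cancel_right, and_comm] using h (x + -a)

theorem isClosed_setOf_isOrderedTranslate {G : Type*} [TopologicalSpace G] [Add G]
    [ContinuousAdd G] {u v : G → ℝ} (hu : Continuous u) (hv : Continuous v) :
    IsClosed {a | IsOrderedTranslate u v a} := by
  have hclosed (x : G) : IsClosed {a | u x ≤ u (x + a) ∧ v (x + a) ≤ v x} := by
    refine (isClosed_le ?_ ?_).and (isClosed_le ?_ ?_) <;> fun_prop
  simpa only [IsOrderedTranslate, ofPred_forall] using isClosed_iInter hclosed

theorem eventually_forall_ge_of_comap_atTop {α : Type*} {f : α → ℝ} {p : α → Prop}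
    (hp : ∀ᶠ x in comap f atTop, p x) : ∀ᶠ M in atTop, ∀ x, M ≤ f x → p x := by
  filter_upwards [eventually_forall_ge_atTop.2 (eventually_comap.1 hp)] with M hM x hx
  exact hM _ hx x rfl

theorem eventually_forall_le_neg_of_comap_atBot {α : Type*} {f : α → ℝ} {p : α → Prop}
    (hp : ∀ᶠ x in comap f atBot, p x) : ∀ᶠ M in atTop, ∀ x, f x ≤ -M → p x := by
  filter_upwards [tendsto_neg_atTop_atBot.eventually
    (eventually_forall_le_atBot.2 (eventually_comap.1 hp))] with M hM x hx
  exact hM _ hx x rfl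

/-- A nonnegative classical solution `(u, v)` of `(P_Λ)` joining the state `(0, 1)` at `ℓ = -∞` to
the state `(1, 0)` at `ℓ = +∞`. Convergence along `comap ℓ atTop` is convergence as `ℓ x → +∞`,
uniformly on the level sets of `ℓ`. -/
structure IsTransition (Λ : ℝ) (ℓ : E →L[ℝ] ℝ) (u v : E → ℝ) : Prop where
  contDiff_left : ContDiff ℝ 2 u
  contDiff_right : ContDiff ℝ 2 v
  neg_laplacian_left : ∀ x, -Δ u x = reaction Λ (u x) (v x)
  neg_laplacian_right : ∀ x, -Δ v x = reaction Λ (v x) (u x)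
  nonneg_left : ∀ x, 0 ≤ u x
  nonneg_right : ∀ x, 0 ≤ v x
  tendsto_left_atTop : Tendsto u (comap ℓ atTop) (𝓝 1)
  tendsto_right_atTop : Tendsto v (comap ℓ atTop) (𝓝 0)
  tendsto_left_atBot : Tendsto u (comap ℓ atBot) (𝓝 0)
  tendsto_right_atBot : Tendsto v (comap ℓ atBot) (𝓝 1)

/-! ### Sliding -/

namespace IsTransition

variable {Λ : ℝ} {ℓ : E →L[ℝ] ℝ} {u v : E → ℝ}

theorem swap (h : IsTransition Λ ℓ u v) : IsTransition Λ (-ℓ) v u := by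
  have htop : comap (-ℓ) atTop = comap ℓ atBot := by
    rw [← comap_neg_atTop, comap_comap]
    rfl
  have hbot : comap (-ℓ) atBot = comap ℓ atTop := by
    rw [← comap_neg_atBot, comap_comap]
    rfl
  exact ⟨h.contDiff_right, h.contDiff_left, h.neg_laplacian_right, h.neg_laplacian_left,
    h.nonneg_right, h.nonneg_left, htop ▸ h.tendsto_right_atBot, htop ▸ h.tendsto_left_atBot,
    hbot ▸ h.tendsto_right_atTop, hbot ▸ h.tendsto_left_atTop⟩

theorem sq_add_sq_le_one (hΛ : 1 ≤ Λ) (h : IsTransition Λ ℓ u v) (x : E) :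
    u x ^ 2 + v x ^ 2 ≤ 1 := by
  have hu := h.contDiff_left
  have hv := h.contDiff_right
  have hu₂ : ContDiff ℝ 2 fun x => u x ^ 2 := hu.pow 2
  have hv₂ : ContDiff ℝ 2 fun x => v x ^ 2 := hv.pow 2
  have hsum : ContDiff ℝ 2 ((fun x => u x ^ 2) + fun x => v x ^ 2) := hu₂.add hv₂
  refine sub_nonpos.1 (nonpos_of_mul_sq_le_laplacian
    (w := (fun x => u x ^ 2) + (fun x => v x ^ 2) - fun _ => 1)
    (hsum.sub contDiff_const) two_pos (fun x hx => ?_) x)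
  rw [hsum.contDiffAt.laplacian_sub contDiffAt_const,
    hu₂.contDiffAt.laplacian_add hv₂.contDiffAt, laplacian_const, Pi.zero_apply, sub_zero]
  simp only [Pi.sub_apply, Pi.add_apply] at hx ⊢
  have hu_sq := two_mul_mul_laplacian_le_laplacian_sq (x := x) hu.contDiffAt
  have hv_sq := two_mul_mul_laplacian_le_laplacian_sq (x := x) hv.contDiffAt
  rw [← neg_neg (Δ u x), h.neg_laplacian_left] at hu_sq
  rw [← neg_neg (Δ v x), h.neg_laplacian_right] at hv_sq
  have hcoupling : 0 ≤ (Λ - 1) * (u x ^ 2 * v x ^ 2) :=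
    mul_nonneg (sub_nonneg.2 hΛ) (by positivity)
  refine le_trans ?_ (add_le_add hu_sq hv_sq)
  unfold reaction
  linarith

theorem mem_Icc_left (hΛ : 1 ≤ Λ) (h : IsTransition Λ ℓ u v) (x : E) : u x ∈ Icc (0 : ℝ) 1 :=
  ⟨h.nonneg_left x, by nlinarith [h.sq_add_sq_le_one hΛ x, h.nonneg_left x]⟩

theorem uniformContinuous_left (hΛ : 1 ≤ Λ) (h : IsTransition Λ ℓ u v) : UniformContinuous u := by
  refine (lipschitzWith_of_abs_laplacian_le (M := 1) (C := 1 + Λ) h.contDiff_left (fun x y => ?_)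
    fun x => ?_).uniformContinuous
  · linarith [(h.mem_Icc_left hΛ x).2, h.nonneg_left y]
  · rw [← abs_neg, h.neg_laplacian_left]
    exact abs_reaction_le (zero_le_one.trans hΛ) (h.mem_Icc_left hΛ x) (h.swap.mem_Icc_left hΛ x)

theorem laplacian_translate_sub_le (hΛ : 1 ≤ Λ) (h : IsTransition Λ ℓ u v) {a : E}
    (ha : IsOrderedTranslate u v a) (x : E) :
    Δ u (x + a) - Δ u x ≤ (Λ + 2) * (u (x + a) - u x) := by
  have hreaction := neg_mul_sub_le_reaction_sub_reaction (zero_le_one.trans hΛ) (h.nonneg_left x)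
    (h.mem_Icc_left hΛ _).2 (h.swap.mem_Icc_left hΛ x).2 (h.nonneg_right _) (ha x).1 (ha x).2
  linarith [h.neg_laplacian_left x, h.neg_laplacian_left (x + a)]

theorem eventually_laplacian_translate_sub_le (hΛ : 1 < Λ) (h : IsTransition Λ ℓ u v) :
    ∀ᶠ M in atTop, ∀ a x, (ℓ x ≤ -M ∨ M ≤ ℓ (x + a)) → u (x + a) < u x →
      u (x + a) - u x ≤ v x - v (x + a) →
        Δ u (x + a) - Δ u x ≤ min ((Λ - 1) / 2) 1 * (u (x + a) - u x) := by
  have hΛ₀ : 0 ≤ Λ := by linarith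
  have hleft : Tendsto (fun x => -1 + Λ * v x ^ 2 - 2 * Λ * u x) (comap ℓ atBot) (𝓝 (Λ - 1)) := by
    convert (((h.tendsto_right_atBot.pow 2).const_mul Λ).const_add (-1)).sub
      (h.tendsto_left_atBot.const_mul (2 * Λ)) using 2
    ring
  have hright : Tendsto (fun x => -1 + 3 * u x ^ 2 - Λ * (√(1 - u x ^ 2) + v x))
      (comap ℓ atTop) (𝓝 2) := by
    have hu := h.tendsto_left_atTop.pow 2
    convert ((hu.const_mul 3).const_add (-1)).sub
      (((hu.const_sub 1).sqrt.add h.tendsto_right_atTop).const_mul Λ) using 2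
    norm_num
  filter_upwards [eventually_forall_le_neg_of_comap_atBot
      (hleft.eventually (eventually_ge_nhds (half_lt_self (sub_pos.2 hΛ)))),
    eventually_forall_ge_of_comap_atTop
      (hright.eventually (eventually_ge_nhds one_lt_two))] with M hMleft hMright a x hx hlt hle
  have hreaction : min ((Λ - 1) / 2) 1 * (u x - u (x + a)) ≤
      reaction Λ (u (x + a)) (v (x + a)) - reaction Λ (u x) (v x) := by
    rcases hx with hx | hx
    · exact mul_sub_le_reaction_sub_reaction_of_le_left hΛ₀ (h.nonneg_right _) (h.nonneg_left _)
        (h.nonneg_right _) (h.swap.mem_Icc_left hΛ.le _).2 (h.swap.mem_Icc_left hΛ.le _).2 hlt.le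
        hle ((min_le_left _ _).trans (hMleft x hx))
    · exact mul_sub_le_reaction_sub_reaction_of_le_right hΛ₀ (h.nonneg_right _) (h.nonneg_left _)
        (h.nonneg_right _) (h.sq_add_sq_le_one hΛ.le x) hlt.le hle
        ((min_le_right _ _).trans (hMright _ hx))
  linarith [h.neg_laplacian_left x, h.neg_laplacian_left (x + a)]

theorem exists_forall_isOrderedTranslate_of_strip (hΛ : 1 < Λ) (h : IsTransition Λ ℓ u v) :
    ∃ M, ∀ a, (∀ x, -M < ℓ x → ℓ (x + a) < M → u x ≤ u (x + a) ∧ v (x + a) ≤ v x) →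
      IsOrderedTranslate u v a := by
  obtain ⟨M, hMu, hMv⟩ := ((h.eventually_laplacian_translate_sub_le hΛ).and
    (h.swap.eventually_laplacian_translate_sub_le hΛ)).exists
  refine ⟨M, fun a hstrip x => ?_⟩
  have hu := h.contDiff_left
  have hv := h.contDiff_right
  have hends (x : E) (hx : ¬(u x ≤ u (x + a) ∧ v (x + a) ≤ v x)) : ℓ x ≤ -M ∨ M ≤ ℓ (x + a) := by
    by_contra! hmid
    exact hx (hstrip x hmid.1 hmid.2)
  have hΔ (x : E) : Δ (fun x => v x - v (x + a)) x = Δ v x - Δ v (x + a) := by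
    have hva : ContDiff ℝ 2 fun x => v (x + a) := by fun_prop
    rw [← laplacian_comp_add_right v a x]
    exact hv.contDiffAt.laplacian_sub hva.contDiffAt
  have hnonneg := nonneg_of_laplacian_le_of_le (b := -1)
    (w := fun x => u (x + a) - u x) (z := fun x => v x - v (x + a)) (by fun_prop) (by fun_prop)
    (lt_min (half_pos (sub_pos.2 hΛ)) one_pos)
    (fun x => by linarith [h.nonneg_left (x + a), (h.mem_Icc_left hΛ.le x).2])
    (fun x => by linarith [h.nonneg_right x, (h.swap.mem_Icc_left hΛ.le (x + a)).2])
    (fun x hneg hle => ?_) (fun x hneg hle => ?_) x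
  · exact ⟨sub_nonneg.1 hnonneg.1, sub_nonneg.1 hnonneg.2⟩
  · rw [laplacian_translate_sub hu]
    exact hMu a x (hends x fun hx => (sub_nonneg.2 hx.1).not_gt hneg) (sub_neg.1 hneg) hle
  · rw [hΔ]
    have hswap := hMv (-a) (x + a)
    simp only [add_neg_cancel_right, neg_apply, neg_le_neg_iff, le_neg (a := M)] at hswap
    exact hswap (hends x fun hx => (sub_nonneg.2 hx.2).not_gt hneg).symm (sub_neg.1 hneg) hle

theorem exists_forall_half_le_sub (h : IsTransition Λ ℓ u v) {a : E} (ha : 0 < ℓ a) (M : ℝ) :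
    ∃ n : ℕ, ∀ x, |ℓ x| ≤ M → 1 / 2 ≤ u (x + n • a) - u (x - n • a) := by
  obtain ⟨m, hm_bot, hm_top⟩ := ((eventually_forall_le_neg_of_comap_atBot
    (h.tendsto_left_atBot.eventually (eventually_le_nhds (by norm_num : (0 : ℝ) < 1 / 4)))).and
    (eventually_forall_ge_of_comap_atTop
    (h.tendsto_left_atTop.eventually
      (eventually_ge_nhds (by norm_num : (3 / 4 : ℝ) < 1))))).exists
  obtain ⟨n, hn⟩ := exists_nat_ge ((m + M) / ℓ a)
  rw [div_le_iff₀ ha] at hn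
  refine ⟨n, fun x hx => ?_⟩
  have hx' := abs_le.1 hx
  have htop := hm_top (x + n • a) (by
    rw [map_add, map_nsmul, nsmul_eq_mul]
    linarith)
  have hbot := hm_bot (x - n • a) (by
    rw [map_sub, map_nsmul, nsmul_eq_mul]
    linarith)
  linarith

theorem exists_pos_forall_le_sub (hΛ : 1 ≤ Λ) (h : IsTransition Λ ℓ u v) {a : E} (ha : 0 < ℓ a)
    (hord : IsOrderedTranslate u v a) (M : ℝ) :
    ∃ c > 0, ∀ x, |ℓ x| ≤ M → c ≤ u (x + a) - u x := by
  obtain ⟨n, hn⟩ := h.exists_forall_half_le_sub ha M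
  obtain ⟨c, hc, hbound⟩ := exists_pos_forall_le_translate_sub (R := ‖n • a‖) h.contDiff_left
    (h.uniformContinuous_left hΛ) (fun x => (hord x).1) (by linarith : 0 ≤ Λ + 2)
    (h.laplacian_translate_sub_le hΛ hord) (2 * n) one_half_pos (norm_nonneg _)
  refine ⟨c, hc, fun x hx => hbound (x - n • a) ?_ x ?_⟩
  · convert hn x hx using 3
    module
  · rw [mem_closedBall_iff_norm, sub_sub_cancel]

theorem exists_pos_forall_le_sub_and_le_sub (hΛ : 1 ≤ Λ) (h : IsTransition Λ ℓ u v) {a : E}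
    (ha : 0 < ℓ a) (hord : IsOrderedTranslate u v a) (M : ℝ) :
    ∃ c > 0, ∀ x, |ℓ x| ≤ M → c ≤ u (x + a) - u x ∧ c ≤ v x - v (x + a) := by
  obtain ⟨c, hc, hu⟩ := h.exists_pos_forall_le_sub hΛ ha hord M
  obtain ⟨d, hd, hv⟩ :=
    h.swap.exists_pos_forall_le_sub hΛ (a := -a) (by simpa using ha) hord.swap (M + |ℓ a|)
  refine ⟨min c d, lt_min hc hd, fun x hx =>
    ⟨(min_le_left _ _).trans (hu x hx), (min_le_right _ _).trans ?_⟩⟩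
  have hxa : |(-ℓ) (x + a)| ≤ M + |ℓ a| := by
    rw [neg_apply, abs_neg, map_add]
    exact (abs_add_le _ _).trans (by gcongr)
  simpa only [add_neg_cancel_right] using hv (x + a) hxa

theorem isOpen_setOf_isOrderedTranslate (hΛ : 1 < Λ) (h : IsTransition Λ ℓ u v) :
    IsOpen {a | 0 < ℓ a ∧ IsOrderedTranslate u v a} := by
  rw [isOpen_iff_mem_nhds]
  rintro a ⟨ha, hord⟩
  obtain ⟨M, hM⟩ := h.exists_forall_isOrderedTranslate_of_strip hΛ
  obtain ⟨c, hc, hgap⟩ := h.exists_pos_forall_le_sub_and_le_sub hΛ.le ha hord M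
  obtain ⟨δ, hδ, hu⟩ := Metric.uniformContinuous_iff.1 (h.uniformContinuous_left hΛ.le) c hc
  obtain ⟨δ', hδ', hv⟩ :=
    Metric.uniformContinuous_iff.1 (h.swap.uniformContinuous_left hΛ.le) c hc
  filter_upwards [ball_mem_nhds a hδ, ball_mem_nhds a hδ', ℓ.continuous.tendsto a (Ioi_mem_nhds ha)]
    with b hb hb' hℓb
  have hℓb₀ : 0 < ℓ b := hℓb
  refine ⟨hℓb, hM b fun x hx hxb => ?_⟩
  rw [map_add] at hxb
  have hgap_x := hgap x (abs_le.2 ⟨hx.le, by linarith⟩)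
  have hu_b := (abs_lt.1 (hu (by rwa [dist_add_left] : dist (x + b) (x + a) < δ))).1
  have hv_b := (abs_lt.1 (hv (by rwa [dist_add_left] : dist (x + b) (x + a) < δ'))).2
  exact ⟨by linarith, by linarith⟩

theorem isOrderedTranslate (hΛ : 1 < Λ) (h : IsTransition Λ ℓ u v) {a : E} (ha : 0 < ℓ a) :
    IsOrderedTranslate u v a := by
  have hconnected : IsPreconnected {a | 0 < ℓ a} :=
    (convex_halfSpace_gt ℓ.isLinear 0).isPreconnected
  have hlarge : ({a | 0 < ℓ a} ∩ {a | 0 < ℓ a ∧ IsOrderedTranslate u v a}).Nonempty := by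
    obtain ⟨M, hM⟩ := h.exists_forall_isOrderedTranslate_of_strip hΛ
    obtain ⟨n, hn⟩ := exists_nat_ge (2 * M / ℓ a)
    rw [div_le_iff₀ ha] at hn
    have hpos : 0 < ℓ ((n + 1) • a) := by
      rw [map_nsmul]
      positivity
    refine ⟨(n + 1) • a, hpos, hpos, hM _ fun x hx hxa => ?_⟩
    rw [map_add, map_nsmul, nsmul_eq_mul] at hxa
    push_cast at hxa
    linarith
  refine (hconnected.subset_of_closure_inter_subset (h.isOpen_setOf_isOrderedTranslate hΛ) hlarge
    ?_ ha).2
  rintro b ⟨hb_closure, hb⟩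
  exact ⟨hb, closure_minimal (fun _ hc => hc.2) (isClosed_setOf_isOrderedTranslate
    h.contDiff_left.continuous h.contDiff_right.continuous) hb_closure⟩

theorem exists_fderiv_pos (h : IsTransition Λ ℓ u v) {ν : E} (hν : 0 < ℓ ν) :
    ∃ y, 0 < fderiv ℝ u y ν := by
  by_contra! hnonpos
  have hderiv (t : ℝ) : HasDerivAt (fun t : ℝ => u (t • ν)) (fderiv ℝ u (t • ν) ν) t := by
    have hline : HasDerivAt (fun t : ℝ => t • ν) ν t := by
      simpa only [id_eq, one_smul] using (hasDerivAt_id t).smul_const ν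
    exact (h.contDiff_left.differentiable two_ne_zero _).hasFDerivAt.comp_hasDerivAt t hline
  have hanti : Antitone fun t : ℝ => u (t • ν) :=
    antitone_of_deriv_nonpos (fun t => (hderiv t).differentiableAt)
      fun t => (hderiv t).deriv.trans_le (hnonpos _)
  have htop : Tendsto (fun t : ℝ => t • ν) atTop (comap ℓ atTop) := by
    simpa [tendsto_comap_iff, Function.comp_def] using tendsto_id.atTop_mul_const hν
  have hbot : Tendsto (fun t : ℝ => t • ν) atBot (comap ℓ atBot) := by
    simpa [tendsto_comap_iff, Function.comp_def] using tendsto_id.atBot_mul_const hν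
  linarith [hanti.le_of_tendsto (h.tendsto_left_atTop.comp htop) 0,
    hanti.ge_of_tendsto (h.tendsto_left_atBot.comp hbot) 0]

theorem fderiv_left_pos (hΛ : 1 < Λ) (h : IsTransition Λ ℓ u v) {ν : E} (hν : 0 < ℓ ν) (x : E) :
    0 < fderiv ℝ u x ν := by
  have hord (t : ℝ) (ht : 0 < t) : IsOrderedTranslate u v (t • ν) :=
    h.isOrderedTranslate hΛ (by simpa using mul_pos ht hν)
  obtain ⟨y, hy⟩ := h.exists_fderiv_pos hν
  exact fderiv_pos_of_forall_le_translate h.contDiff_left (by linarith : 0 ≤ Λ + 2)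
    (fun t ht x => (hord t ht x).1)
    (fun t ht => h.laplacian_translate_sub_le hΛ.le (hord t ht)) hy x

end IsTransition

theorem stmt_16_general {Λ : ℝ} (hΛ : 1 < Λ) {ℓ : E →L[ℝ] ℝ} {u v : E → ℝ}
    (h : IsTransition Λ ℓ u v) {ν : E} (hν : 0 < ℓ ν) (x : E) :
    0 < fderiv ℝ u x ν ∧ fderiv ℝ v x ν < 0 := by
  have hv := h.swap.fderiv_left_pos hΛ (ν := -ν) (by simpa using hν) x
  exact ⟨h.fderiv_left_pos hΛ hν x, by simpa using hv⟩

/-! ### Classical solutions in coordinates -/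

theorem lap_eq_laplacian {N : ℕ} {f : EuclideanSpace ℝ (Fin N) → ℝ} (hf : ContDiff ℝ 2 f)
    (x : EuclideanSpace ℝ (Fin N)) : lap N f x = Δ f x := by
  have hDf : DifferentiableAt ℝ (fderiv ℝ f) x :=
    (hf.fderiv_right (m := 1) (by norm_num)).differentiable one_ne_zero x
  rw [laplacian_eq_iteratedFDeriv_orthonormalBasis f (EuclideanSpace.basisFun (Fin N) ℝ)]
  refine Finset.sum_congr rfl fun i _ => ?_
  rw [iteratedFDeriv_two_apply, fderiv_clm_apply hDf (differentiableAt_const _)]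
  simp

theorem tendsto_comap_atTop_of_forall {α : Type*} {f g : α → ℝ} {c : ℝ}
    (h : ∀ ε > 0, ∃ M, ∀ x, M ≤ f x → |g x - c| < ε) : Tendsto g (comap f atTop) (𝓝 c) :=
  (atTop_basis.comap f).tendsto_iff nhds_basis_ball |>.2 fun ε hε => by
    obtain ⟨M, hM⟩ := h ε hε
    exact ⟨M, trivial, fun x hx => hM x hx⟩

theorem tendsto_comap_atBot_of_forall {α : Type*} {f g : α → ℝ} {c : ℝ}
    (h : ∀ ε > 0, ∃ M, ∀ x, f x ≤ M → |g x - c| < ε) : Tendsto g (comap f atBot) (𝓝 c) :=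
  (atBot_basis.comap f).tendsto_iff nhds_basis_ball |>.2 fun ε hε => by
    obtain ⟨M, hM⟩ := h ε hε
    exact ⟨M, trivial, fun x hx => hM x hx⟩

theorem IsTransition.of_isSolution {N : ℕ} {Λ : ℝ} {u v : EuclideanSpace ℝ (Fin (N + 1)) → ℝ}
    (hsol : IsSolution (N + 1) Λ u v) (hu : ∀ x, 0 ≤ u x) (hv : ∀ x, 0 ≤ v x)
    (hinf : Hinf N u v) :
    IsTransition Λ (EuclideanSpace.proj (Fin.last N) : EuclideanSpace ℝ (Fin (N + 1)) →L[ℝ] ℝ)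
      u v := by
  obtain ⟨hu₂, hv₂, hu_eq, hv_eq⟩ := hsol
  obtain ⟨htop, hbot⟩ := hinf
  refine ⟨hu₂, hv₂, fun x => ?_, fun x => ?_, hu, hv,
    tendsto_comap_atTop_of_forall fun ε hε => (htop ε hε).imp fun M hM x hx => (hM x hx).1,
    tendsto_comap_atTop_of_forall fun ε hε => (htop ε hε).imp fun M hM x hx => ?_,
    tendsto_comap_atBot_of_forall fun ε hε => (hbot ε hε).imp fun M hM x hx => ?_,
    tendsto_comap_atBot_of_forall fun ε hε => (hbot ε hε).imp fun M hM x hx => (hM x hx).2⟩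
  · rw [← lap_eq_laplacian hu₂, hu_eq, reaction]
  · rw [← lap_eq_laplacian hv₂, hv_eq, reaction]
    ring
  · rw [sub_zero]
    exact (hM x hx).2
  · rw [sub_zero]
    exact (hM x hx).1

end

/-- Proposition 4.1: monotonicity in all directions of the upper
hemisphere `{ν ∈ 𝕊^{N-1} : ν · e_N > 0}`. -/
theorem stmt_16 (N : ℕ) (Λ : ℝ) (hΛ : 1 < Λ)
    (u v : EuclideanSpace ℝ (Fin (N + 1)) → ℝ)
    (hsol : IsSolution (N + 1) Λ u v)
    (hu : ∀ x, 0 ≤ u x) (hv : ∀ x, 0 ≤ v x)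
    (hinf : Hinf N u v) :
    ∀ ν : EuclideanSpace ℝ (Fin (N + 1)), ‖ν‖ = 1 → 0 < ν (Fin.last N) →
      ∀ x, 0 < fderiv ℝ u x ν ∧ fderiv ℝ v x ν < 0 := by
  intro ν _ hν x
  exact stmt_16_general hΛ (.of_isSolution hsol hu hv hinf) hν x
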